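/- arXiv:2303.06864 — 3 statements merged into one kernel-verified Lean document; each statement's English description precedes it below -/
import Mathlib

section
/- Let G be a finite simple graph and let X be a nonempty vertex cover of G. Then χ_ssc(G) ≤ |X|; that is, the number of colours required to subset square colour G is at most the size of a vertex cover of G. -/
open SimpleGraph

/-- The closed neighbourhood of `v` in `G`. -/
def closedNbhd {V : Type*} (G : SimpleGraph V) (v : V) : Set V :=
  {u | u = v ∨ G.Adj v u}

/-- `c` is a `q`-subset square colouring of `G`: colours `1, …, q` are real colours and
colour `0` means "uncoloured"; every closed neighbourhood contains a coloured vertex, and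
no nonzero colour appears on two distinct vertices of a closed neighbourhood. -/
def IsSubsetSquareColouring {V : Type*} (G : SimpleGraph V) (q : ℕ) (c : V → ℕ) : Prop :=
  (∀ v, c v ≤ q) ∧
  (∀ v, ∃ u ∈ closedNbhd G v, c u ≠ 0) ∧
  (∀ v i, 1 ≤ i → i ≤ q →
    ∀ u ∈ closedNbhd G v, ∀ w ∈ closedNbhd G v, c u = i → c w = i → u = w)

/-- The subset square chromatic number `χ_ssc G`. -/
noncomputable def sscNum {V : Type*} (G : SimpleGraph V) : ℕ :=
  sInf {q | ∃ c : V → ℕ, IsSubsetSquareColouring G q c}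

/-!
Give the vertices of `X` pairwise distinct colours, every isolated vertex outside `X` the colour
`1`, and leave all other vertices uncoloured. A closed neighbourhood containing an isolated vertex
is a singleton, so reusing the colour `1` there creates no conflict. Every edge at a non-isolated
vertex has an endpoint in a vertex cover `X`, so the closed neighbourhood of that vertex meets `X`.
-/

section

variable {V : Type*} {G : SimpleGraph V} {X : Set V} {f : V → ℕ} {q : ℕ} {u v w : V}

theorem sscNum_le_of_isSubsetSquareColouring {c : V → ℕ} (hc : IsSubsetSquareColouring G q c) :
    sscNum G ≤ q :=
  Nat.sInf_le ⟨c, hc⟩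

theorem self_mem_closedNbhd (G : SimpleGraph V) (v : V) : v ∈ closedNbhd G v :=
  Or.inl rfl

theorem eq_of_isIsolated_of_mem_closedNbhd (hu : G.IsIsolated u) (huv : u ∈ closedNbhd G v)
    (hwv : w ∈ closedNbhd G v) : u = w := by
  obtain rfl | hvu := huv
  · exact (hwv.resolve_right (hu w)).symm
  · exact absurd hvu.symm (hu v)

open Classical in
/-- The colouring that agrees with `f` on `X`, gives colour `1` to the isolated vertices outside
`X`, and leaves every other vertex uncoloured (colour `0`). It turns a labelling `f` of a set that
dominates the non-isolated vertices into a subset square colouring of `G`. -/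
noncomputable def isolatedExtension (G : SimpleGraph V) (X : Set V) (f : V → ℕ) (v : V) : ℕ :=
  if v ∈ X then f v else if G.IsIsolated v then 1 else 0

theorem isolatedExtension_of_mem (hv : v ∈ X) : isolatedExtension G X f v = f v :=
  if_pos hv

theorem isolatedExtension_le (hq : 1 ≤ q) (hf : ∀ v ∈ X, f v ≤ q) (v : V) :
    isolatedExtension G X f v ≤ q := by
  unfold isolatedExtension
  split_ifs with hv
  exacts [hf v hv, hq, q.zero_le]

theorem mem_or_isIsolated_of_isolatedExtension_ne_zero (hv : isolatedExtension G X f v ≠ 0) :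
    v ∈ X ∨ G.IsIsolated v := by
  by_contra! h
  exact hv ((if_neg h.1).trans (if_neg h.2))

theorem isolatedExtension_ne_zero_of_isIsolated (hf : ∀ v ∈ X, f v ≠ 0) (hv : G.IsIsolated v) :
    isolatedExtension G X f v ≠ 0 := by
  unfold isolatedExtension
  split_ifs with hvX
  exacts [hf v hvX, one_ne_zero]

theorem exists_mem_closedNbhd_isolatedExtension_ne_zero (hf : ∀ v ∈ X, f v ≠ 0)
    (hX : ∀ v ∈ G.support, ∃ u ∈ closedNbhd G v, u ∈ X) (v : V) :
    ∃ u ∈ closedNbhd G v, isolatedExtension G X f u ≠ 0 := by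
  by_cases hv : G.IsIsolated v
  · exact ⟨v, self_mem_closedNbhd G v, isolatedExtension_ne_zero_of_isIsolated hf hv⟩
  · obtain ⟨u, huv, huX⟩ := hX v (G.mem_support_iff_not_isIsolated.mpr hv)
    exact ⟨u, huv, (isolatedExtension_of_mem huX).trans_ne (hf u huX)⟩

theorem eq_of_isolatedExtension_eq (hf : Set.InjOn f (closedNbhd G v ∩ X))
    (hu : u ∈ closedNbhd G v) (hw : w ∈ closedNbhd G v) (hu0 : isolatedExtension G X f u ≠ 0)
    (huw : isolatedExtension G X f u = isolatedExtension G X f w) : u = w := by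
  obtain huX | hu_iso := mem_or_isIsolated_of_isolatedExtension_ne_zero hu0
  · obtain hwX | hw_iso := mem_or_isIsolated_of_isolatedExtension_ne_zero (huw ▸ hu0)
    · rw [isolatedExtension_of_mem huX, isolatedExtension_of_mem hwX] at huw
      exact hf ⟨hu, huX⟩ ⟨hw, hwX⟩ huw
    · exact (eq_of_isIsolated_of_mem_closedNbhd hw_iso hw hu).symm
  · exact eq_of_isIsolated_of_mem_closedNbhd hu_iso hu hw

theorem isSubsetSquareColouring_isolatedExtension (hq : 1 ≤ q)
    (hmaps : Set.MapsTo f X (Set.Icc 1 q)) (hinj : ∀ v, Set.InjOn f (closedNbhd G v ∩ X))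
    (hX : ∀ v ∈ G.support, ∃ u ∈ closedNbhd G v, u ∈ X) :
    IsSubsetSquareColouring G q (isolatedExtension G X f) := by
  refine ⟨isolatedExtension_le hq fun v hv ↦ (hmaps hv).2,
    exists_mem_closedNbhd_isolatedExtension_ne_zero
      (fun v hv ↦ Nat.one_le_iff_ne_zero.mp (hmaps hv).1) hX, ?_⟩
  intro v i hi _ u hu w hw hui hwi
  exact eq_of_isolatedExtension_eq (hinj v) hu hw (by omega) (hui.trans hwi.symm)

end

theorem stmt2_general {V : Type*} (G : SimpleGraph V) (X : Finset V) (hne : X.Nonempty)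
    (hX : ∀ v ∈ G.support, ∃ u ∈ closedNbhd G v, u ∈ X) : sscNum G ≤ X.card := by
  obtain ⟨f, hmaps, hinj⟩ : ∃ f : V → ℕ, (X : Set V) ⊆ f ⁻¹' Set.Icc 1 X.card ∧ Set.InjOn f X := by
    refine X.finite_toSet.exists_injOn_of_encard_le ?_
    rw [← Finset.coe_Icc, Set.encard_coe_eq_coe_finsetCard, Set.encard_coe_eq_coe_finsetCard,
      Nat.card_Icc, Nat.add_sub_cancel]
  exact sscNum_le_of_isSubsetSquareColouring <| isSubsetSquareColouring_isolatedExtension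
    hne.card_pos hmaps (fun _ ↦ hinj.mono Set.inter_subset_right) hX

theorem stmt2 {V : Type*} [Fintype V] (G : SimpleGraph V) (X : Finset V)
    (hne : X.Nonempty) (hvc : ∀ u v : V, G.Adj u v → u ∈ X ∨ v ∈ X) :
    sscNum G ≤ X.card := by
  refine stmt2_general G X hne fun v ⟨u, hvu⟩ ↦ ?_
  exact (hvc v u hvu).elim (⟨v, self_mem_closedNbhd G v, ·⟩) (⟨u, Or.inr hvu, ·⟩)
end

section
/- For every integer d ≥ 2, let T_d be the rooted tree of height 2 in which the root has exactly d children and each child of the root has exactly d children (so T_d is a tree on 1 + d + d² vertices with maximum degree d + 1). Then χ_ssc(T_d) ≥ d; that is, Δ − 1 colours are sometimes necessary to subset square colour a tree of maximum degree Δ. -/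
open SimpleGraph

/-- The rooted tree of height 2 in which the root has `d` children and every child of
the root has `d` children. -/
def heightTwoTree (d : ℕ) : SimpleGraph (Unit ⊕ Fin d ⊕ Fin d × Fin d) :=
  SimpleGraph.fromRel (fun x y =>
    (∃ i : Fin d, x = Sum.inl () ∧ y = Sum.inr (Sum.inl i)) ∨
    (∃ i j : Fin d, x = Sum.inr (Sum.inl i) ∧ y = Sum.inr (Sum.inr (i, j))))

/-!
In any closed neighbourhood the coloured vertices have distinct colours in `{1, …, q}`, so there are
at most `q` of them. If every child of the root is coloured, the closed neighbourhood of the root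
contains `d` coloured vertices. Otherwise some child `x` is uncoloured; each leaf below `x` has only
`x` as a neighbour and so must be coloured itself, and the closed neighbourhood of `x` contains `d`
coloured vertices.
-/

section

variable {V ι κ : Type*} {G : SimpleGraph V} {q : ℕ} {c : V → ℕ}

theorem isSubsetSquareColouring_of_injective (hinj : Function.Injective c)
    (hne : ∀ v, c v ≠ 0) (hle : ∀ v, c v ≤ q) : IsSubsetSquareColouring G q c :=
  ⟨hle, fun v => ⟨v, Or.inl rfl, hne v⟩,
    fun _ _ _ _ _ _ _ _ hu hw => hinj (hu.trans hw.symm)⟩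

theorem exists_isSubsetSquareColouring [Finite V] (G : SimpleGraph V) :
    ∃ q, ∃ c : V → ℕ, IsSubsetSquareColouring G q c := by
  obtain ⟨n, ⟨e⟩⟩ := Finite.exists_equiv_fin V
  exact ⟨n, fun v => e v + 1, isSubsetSquareColouring_of_injective
    (Nat.succ_injective.comp (Fin.val_injective.comp e.injective))
    (fun v => Nat.succ_ne_zero _) (fun v => (e v).isLt)⟩

theorem le_sscNum_iff [Finite V] {n : ℕ} :
    n ≤ sscNum G ↔ ∀ q c, IsSubsetSquareColouring G q c → n ≤ q :=
  (le_csInf_iff (OrderBot.bddBelow _) (exists_isSubsetSquareColouring G)).trans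
    ⟨fun h q c hc => h q ⟨c, hc⟩, fun h q ⟨c, hc⟩ => h q c hc⟩

namespace IsSubsetSquareColouring

theorem injOn_closedNbhd (hc : IsSubsetSquareColouring G q c) (v : V) :
    Set.InjOn c {u ∈ closedNbhd G v | c u ≠ 0} :=
  fun u ⟨hu, hu0⟩ w ⟨hw, _⟩ huw =>
    hc.2.2 v (c u) (Nat.one_le_iff_ne_zero.2 hu0) (hc.1 u) u hu w hw rfl huw.symm

theorem card_le_of_injective [Fintype ι] (hc : IsSubsetSquareColouring G q c) {v : V}
    {f : ι → V} (hf : Function.Injective f) (hadj : ∀ i, G.Adj v (f i))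
    (hne : ∀ i, c (f i) ≠ 0) : Fintype.card ι ≤ q := by
  have hmaps : Set.MapsTo (c ∘ f) (Finset.univ : Finset ι) (Finset.Icc 1 q) := fun i _ =>
    Finset.mem_coe.2 (Finset.mem_Icc.2 ⟨Nat.one_le_iff_ne_zero.2 (hne i), hc.1 (f i)⟩)
  have hinj : Function.Injective (c ∘ f) := fun i j hij =>
    hf (hc.injOn_closedNbhd v ⟨Or.inr (hadj i), hne i⟩ ⟨Or.inr (hadj j), hne j⟩ hij)
  simpa using Finset.card_le_card_of_injOn (c ∘ f) hmaps hinj.injOn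

theorem ne_zero_of_forall_adj_eq (hc : IsSubsetSquareColouring G q c) {u v : V}
    (huv : ∀ w, G.Adj u w → w = v) (hv : c v = 0) : c u ≠ 0 := by
  obtain ⟨w, rfl | hw, hw0⟩ := hc.2.1 u
  · exact hw0
  · exact absurd (huv w hw ▸ hv) hw0

theorem min_card_child_card_leaf_le [Fintype ι] [Fintype κ]
    (hc : IsSubsetSquareColouring G q c) {root : V}
    {child : ι → V} (hchild : Function.Injective child) (hroot : ∀ i, G.Adj root (child i))
    {leaf : ι → κ → V} (hleaf : ∀ i, Function.Injective (leaf i))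
    (hadj : ∀ i j v, G.Adj (leaf i j) v ↔ v = child i) :
    min (Fintype.card ι) (Fintype.card κ) ≤ q := by
  by_cases hcoloured : ∀ i, c (child i) ≠ 0
  · exact min_le_of_left_le (hc.card_le_of_injective hchild hroot hcoloured)
  · obtain ⟨i, hi⟩ := not_forall_not.1 hcoloured
    have hleaf_ne (j : κ) : c (leaf i j) ≠ 0 :=
      hc.ne_zero_of_forall_adj_eq (fun v => (hadj i j v).1) hi
    exact min_le_of_right_le
      (hc.card_le_of_injective (hleaf i) (fun j => ((hadj i j _).2 rfl).symm) hleaf_ne)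

end IsSubsetSquareColouring

end

theorem heightTwoTree_adj_root_child {d : ℕ} (i : Fin d) :
    (heightTwoTree d).Adj (Sum.inl ()) (Sum.inr (Sum.inl i)) := by
  simp [heightTwoTree]

theorem heightTwoTree_adj_leaf_iff {d : ℕ} (i j : Fin d) (v : Unit ⊕ Fin d ⊕ Fin d × Fin d) :
    (heightTwoTree d).Adj (Sum.inr (Sum.inr (i, j))) v ↔ v = Sum.inr (Sum.inl i) := by
  rcases v with _ | _ | _ <;> simp [heightTwoTree, eq_comm]

theorem stmt7 (d : ℕ) (hd : 2 ≤ d) : d ≤ sscNum (heightTwoTree d) := by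
  refine le_sscNum_iff.2 fun q c hc => ?_
  have hmin : min (Fintype.card (Fin d)) (Fintype.card (Fin d)) ≤ q :=
    hc.min_card_child_card_leaf_le (Sum.inr_injective.comp Sum.inl_injective)
      heightTwoTree_adj_root_child
      (leaf := fun i j => Sum.inr (Sum.inr (i, j)))
      (fun i => Sum.inr_injective.comp (Sum.inr_injective.comp (Prod.mk_right_injective i)))
      heightTwoTree_adj_leaf_iff
  simpa using hmin
end

section
/- Let G be the complete join of two finite simple graphs G₁ and G₂, each having at least one vertex, i.e. V(G) = V(G₁) ⊎ V(G₂) and E(G) = E(G₁) ∪ E(G₂) ∪ {uv : u ∈ V(G₁), v ∈ V(G₂)}. Then χ_ssc(G) ≤ 2. -/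
open SimpleGraph

/-- The complete join of two graphs: the disjoint union together with all edges between
the two vertex sets. -/
def completeJoin {V₁ V₂ : Type*} (G₁ : SimpleGraph V₁) (G₂ : SimpleGraph V₂) :
    SimpleGraph (V₁ ⊕ V₂) :=
  SimpleGraph.fromRel (fun x y =>
    (∃ a b, x = Sum.inl a ∧ y = Sum.inl b ∧ G₁.Adj a b) ∨
    (∃ a b, x = Sum.inr a ∧ y = Sum.inr b ∧ G₂.Adj a b) ∨
    (∃ a b, x = Sum.inl a ∧ y = Sum.inr b))

/-!
Giving the vertices of a finite dominating set pairwise distinct colours, and leaving all other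
vertices uncoloured, is a subset square colouring, so the subset square chromatic number is at most
the size of any finite dominating set. In a complete join, one vertex from each side dominates.
-/

section

variable {V V₁ V₂ : Type*}

theorem IsSubsetSquareColouring.sscNum_le {G : SimpleGraph V} {q : ℕ} {c : V → ℕ}
    (hc : IsSubsetSquareColouring G q c) : sscNum G ≤ q :=
  Nat.sInf_le ⟨c, hc⟩

/-- `S` is a dominating set of `G`: every closed neighbourhood meets `S`. -/
def IsDominatingSet (G : SimpleGraph V) (S : Set V) : Prop :=
  ∀ v, ∃ u ∈ closedNbhd G v, u ∈ S

open Classical in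
/-- The colouring that gives the vertices of `S` pairwise distinct colours `1, …, |S|` and leaves
all other vertices uncoloured. The shift by one keeps colour `0` for the uncoloured vertices. -/
noncomputable def rainbowColouring (S : Finset V) (v : V) : ℕ :=
  if hv : v ∈ S then S.equivFin ⟨v, hv⟩ + 1 else 0

theorem rainbowColouring_of_mem {S : Finset V} {v : V} (hv : v ∈ S) :
    rainbowColouring S v = S.equivFin ⟨v, hv⟩ + 1 :=
  dif_pos hv

theorem rainbowColouring_of_notMem {S : Finset V} {v : V} (hv : v ∉ S) :
    rainbowColouring S v = 0 :=
  dif_neg hv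

theorem rainbowColouring_ne_zero_iff {S : Finset V} {v : V} :
    rainbowColouring S v ≠ 0 ↔ v ∈ S where
  mp := not_imp_comm.mp rainbowColouring_of_notMem
  mpr hv := by simp only [rainbowColouring_of_mem hv, ne_eq, Nat.succ_ne_zero, not_false_eq_true]

theorem rainbowColouring_le_card (S : Finset V) (v : V) : rainbowColouring S v ≤ S.card := by
  by_cases hv : v ∈ S
  · rw [rainbowColouring_of_mem hv]
    exact (S.equivFin ⟨v, hv⟩).isLt
  · rw [rainbowColouring_of_notMem hv]
    exact S.card.zero_le

theorem rainbowColouring_injOn (S : Finset V) : Set.InjOn (rainbowColouring S) S := by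
  intro u hu w hw huw
  rw [rainbowColouring_of_mem hu, rainbowColouring_of_mem hw, Nat.succ_inj, Fin.val_inj] at huw
  exact congrArg Subtype.val (S.equivFin.injective huw)

namespace IsDominatingSet

variable {G : SimpleGraph V} {S : Finset V}

theorem isSubsetSquareColouring_rainbowColouring (hS : IsDominatingSet G S) :
    IsSubsetSquareColouring G S.card (rainbowColouring S) := by
  refine ⟨rainbowColouring_le_card S, fun v ↦ ?_, fun v i hi _ u _ w _ hu hw ↦ ?_⟩
  · obtain ⟨u, huv, huS⟩ := hS v
    exact ⟨u, huv, rainbowColouring_ne_zero_iff.mpr huS⟩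
  · have mem_of_colour_eq {x : V} (hx : rainbowColouring S x = i) : x ∈ S :=
      rainbowColouring_ne_zero_iff.mp (by lia)
    exact rainbowColouring_injOn S (mem_of_colour_eq hu) (mem_of_colour_eq hw) (hu.trans hw.symm)

theorem sscNum_le_card (hS : IsDominatingSet G S) : sscNum G ≤ S.card :=
  hS.isSubsetSquareColouring_rainbowColouring.sscNum_le

end IsDominatingSet

theorem completeJoin_adj_inl_inr (G₁ : SimpleGraph V₁) (G₂ : SimpleGraph V₂) (a : V₁) (b : V₂) :
    (completeJoin G₁ G₂).Adj (Sum.inl a) (Sum.inr b) :=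
  ⟨Sum.inl_ne_inr, Or.inl (Or.inr (Or.inr ⟨a, b, rfl, rfl⟩))⟩

theorem isDominatingSet_completeJoin_pair (G₁ : SimpleGraph V₁) (G₂ : SimpleGraph V₂)
    (a : V₁) (b : V₂) : IsDominatingSet (completeJoin G₁ G₂) {Sum.inl a, Sum.inr b} := by
  rintro (x | y)
  · exact ⟨Sum.inr b, Or.inr (completeJoin_adj_inl_inr G₁ G₂ x b), Or.inr rfl⟩
  · exact ⟨Sum.inl a, Or.inr (completeJoin_adj_inl_inr G₁ G₂ a y).symm, Or.inl rfl⟩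

theorem stmt14_general [Nonempty V₁] [Nonempty V₂] (G₁ : SimpleGraph V₁) (G₂ : SimpleGraph V₂) :
    sscNum (completeJoin G₁ G₂) ≤ 2 := by
  classical
  obtain ⟨a⟩ := ‹Nonempty V₁›
  obtain ⟨b⟩ := ‹Nonempty V₂›
  let S : Finset (V₁ ⊕ V₂) := {Sum.inl a, Sum.inr b}
  have hS : IsDominatingSet (completeJoin G₁ G₂) S := by
    simpa only [S, Finset.coe_pair] using isDominatingSet_completeJoin_pair G₁ G₂ a b
  exact hS.sscNum_le_card.trans Finset.card_le_two

end

theorem stmt14 {V₁ V₂ : Type*} [Fintype V₁] [Fintype V₂]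
    [Nonempty V₁] [Nonempty V₂]
    (G₁ : SimpleGraph V₁) (G₂ : SimpleGraph V₂) :
    sscNum (completeJoin G₁ G₂) ≤ 2 :=
  stmt14_general G₁ G₂
end
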